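/- arXiv:1811.08647 — 2 statements merged into one kernel-verified Lean document; each statement's English description precedes it below -/
import Mathlib

section
/- For every ξ ∈ ℝ and b > 0, ∫_0^∞ e^{-u cosh b} K_{iξ}(u) du = π sin(ξ b) / (sinh(π ξ) sinh b), where K_{iξ}(u) := (1/2) ∫_ℝ e^{-u cosh x} cos(ξ x) dx, and for ξ = 0 the right-hand side is interpreted as b / sinh b. -/
open MeasureTheory Real Set

/-!
Since `sinh b / (cosh x + cosh b) = σ(x + b) - σ(x - b)` for the logistic sigmoid `σ`, the kernel
`(cosh x + cosh b)⁻¹` is, up to a constant, the convolution of `𝟙_(-b, b]` with the logistic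
density `σ' = σ (1 - σ)`. Substituting `v = σ x`, so that `v / (1 - v) = exp x`, turns the
bilateral Laplace transform `∫ σ'(x) exp (s x) dx` into the Beta integral
`B(1 + s, 1 - s) = Γ(1 + s) Γ(1 - s) = π s / sin (π s)`, convergent for `|Re s| < 1`.
The transform of a convolution is the product of the transforms, which gives
`∫ cos (z x) / (cosh x + cosh b) dx` for `|Im z| < 1`. By Fubini the latter is twice the Laplace
transform at `cosh b` of the Macdonald function `K_{iz}`.
-/

section LaplaceTransform

lemma integral_comp_sub_mul_exp_eq_convolution (f : ℝ → ℂ) (ν : Measure ℝ) (s : ℂ) (x : ℝ) :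
    (∫ t, f (x - t) ∂ν) * Complex.exp (s * x) =
      convolution (fun t : ℝ ↦ Complex.exp (s * t)) (fun y : ℝ ↦ f y * Complex.exp (s * y))
        (ContinuousLinearMap.mul ℝ ℂ) ν x := by
  rw [convolution, ← integral_mul_const]
  congr 1 with t
  rw [ContinuousLinearMap.mul_apply', mul_left_comm, ← Complex.exp_add]
  push_cast
  ring_nf

variable {f : ℝ → ℂ} {ν : Measure ℝ} [SFinite ν] {s : ℂ}

lemma integrable_integral_comp_sub_mul_exp
    (hν : Integrable (fun t : ℝ ↦ Complex.exp (s * t)) ν)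
    (hf : Integrable fun x : ℝ ↦ f x * Complex.exp (s * x)) :
    Integrable fun x : ℝ ↦ (∫ t, f (x - t) ∂ν) * Complex.exp (s * x) := by
  simp only [integral_comp_sub_mul_exp_eq_convolution]
  exact (hν.convolution_integrand (.mul ℝ ℂ) hf).integral_prod_left

lemma integral_integral_comp_sub_mul_exp
    (hν : Integrable (fun t : ℝ ↦ Complex.exp (s * t)) ν)
    (hf : Integrable fun x : ℝ ↦ f x * Complex.exp (s * x)) :
    ∫ x : ℝ, (∫ t, f (x - t) ∂ν) * Complex.exp (s * x) =
      (∫ t : ℝ, Complex.exp (s * t) ∂ν) * ∫ x : ℝ, f x * Complex.exp (s * x) := by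
  simp only [integral_comp_sub_mul_exp_eq_convolution]
  exact integral_convolution _ hν hf

end LaplaceTransform

section ExponentialMixture

variable {α E : Type*} [MeasurableSpace α] {μ : Measure α} [SFinite μ]
  [NormedAddCommGroup E] [NormedSpace ℝ E] {a : α → ℝ} {F : α → E}

lemma integral_exp_neg_mul_Ioi_zero {c : ℝ} (hc : 0 < c) :
    ∫ u in Ioi (0 : ℝ), rexp (-u * c) = c⁻¹ := by
  simpa [mul_comm] using integral_exp_mul_Ioi (neg_lt_zero.2 hc) 0

lemma integrable_exp_neg_mul_smul_prod (ha : Measurable a) (ha₀ : ∀ x, 0 < a x)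
    (hF : Integrable (fun x ↦ (a x)⁻¹ • F x) μ) :
    Integrable (Function.uncurry fun (u : ℝ) x ↦ rexp (-u * a x) • F x)
      ((volume.restrict (Ioi 0)).prod μ) := by
  have hF_meas : AEStronglyMeasurable F μ :=
    (ha.aestronglyMeasurable.smul hF.1).congr <| .of_forall fun x ↦ by
      simp [smul_smul, (ha₀ x).ne']
  have h_meas : AEStronglyMeasurable (Function.uncurry fun (u : ℝ) x ↦ rexp (-u * a x) • F x)
      ((volume.restrict (Ioi 0)).prod μ) :=
    (by fun_prop : Measurable fun p : ℝ × α ↦ rexp (-p.1 * a p.2)).aestronglyMeasurable.smul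
      hF_meas.comp_snd
  refine (integrable_prod_iff' h_meas).2 ⟨.of_forall fun x ↦ ?_, hF.norm.congr ?_⟩
  · refine Integrable.smul_const ?_ (F x)
    simpa [mul_comm, IntegrableOn] using integrableOn_exp_mul_Ioi (neg_lt_zero.2 (ha₀ x)) 0
  · refine .of_forall fun x ↦ ?_
    simp only [Function.uncurry, norm_smul, Real.norm_eq_abs, Real.abs_exp, abs_inv,
      abs_of_pos (ha₀ x), integral_mul_const, integral_exp_neg_mul_Ioi_zero (ha₀ x)]

lemma integral_Ioi_integral_exp_neg_mul_smul [CompleteSpace E] (ha : Measurable a)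
    (ha₀ : ∀ x, 0 < a x) (hF : Integrable (fun x ↦ (a x)⁻¹ • F x) μ) :
    ∫ u in Ioi (0 : ℝ), ∫ x, rexp (-u * a x) • F x ∂μ = ∫ x, (a x)⁻¹ • F x ∂μ := by
  rw [integral_integral_swap (integrable_exp_neg_mul_smul_prod ha ha₀ hF)]
  simp only [integral_smul_const, integral_exp_neg_mul_Ioi_zero (ha₀ _)]

end ExponentialMixture

section Logistic

/-- The density of the logistic distribution, i.e. the derivative of `Real.sigmoid`. -/
noncomputable def logisticPDF (y : ℝ) : ℝ := sigmoid y * (1 - sigmoid y)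

lemma logisticPDF_nonneg (y : ℝ) : 0 ≤ logisticPDF y :=
  mul_nonneg (sigmoid_nonneg y) (sub_nonneg.2 (sigmoid_le_one y))

lemma continuous_logisticPDF : Continuous logisticPDF :=
  continuous_sigmoid.mul (continuous_const.sub continuous_sigmoid)

lemma hasDerivAt_sigmoid_logisticPDF (y : ℝ) : HasDerivAt sigmoid (logisticPDF y) y :=
  hasDerivAt_sigmoid y

section ChangeOfVariables

variable {E : Type*} [NormedAddCommGroup E] [NormedSpace ℝ E] (f : ℝ → E)

lemma integrable_logisticPDF_smul_comp_sigmoid :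
    Integrable (fun y ↦ logisticPDF y • f (sigmoid y)) ↔ IntegrableOn f (Ioo 0 1) := by
  have h := integrableOn_image_iff_integrableOn_abs_deriv_smul MeasurableSet.univ
    (fun y _ ↦ (hasDerivAt_sigmoid_logisticPDF y).hasDerivWithinAt) sigmoid_injective.injOn f
  rw [image_univ, range_sigmoid, integrableOn_univ] at h
  simp only [h, abs_of_nonneg (logisticPDF_nonneg _)]

lemma integral_logisticPDF_smul_comp_sigmoid :
    ∫ y, logisticPDF y • f (sigmoid y) = ∫ v in Ioo 0 1, f v := by
  have h := integral_image_eq_integral_abs_deriv_smul MeasurableSet.univ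
    (fun y _ ↦ (hasDerivAt_sigmoid_logisticPDF y).hasDerivWithinAt) sigmoid_injective.injOn f
  rw [image_univ, range_sigmoid, Measure.restrict_univ] at h
  simp only [h, abs_of_nonneg (logisticPDF_nonneg _)]

end ChangeOfVariables

lemma log_sigmoid_sub_log_one_sub_sigmoid (y : ℝ) :
    Real.log (sigmoid y) - Real.log (1 - sigmoid y) = y := by
  rw [← sigmoid_neg, ← sigmoid_mul_rexp_neg,
    Real.log_mul (sigmoid_pos y).ne' (Real.exp_pos _).ne', Real.log_exp]
  ring

lemma sigmoid_cpow_mul_one_sub_sigmoid_cpow_neg (s : ℂ) (y : ℝ) :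
    (sigmoid y : ℂ) ^ s * (1 - (sigmoid y : ℂ)) ^ (-s) = Complex.exp (s * y) := by
  have h₀ : 0 < sigmoid y := sigmoid_pos y
  have h₁ : 0 < 1 - sigmoid y := sub_pos.2 (sigmoid_lt_one y)
  rw [← Complex.ofReal_one, ← Complex.ofReal_sub,
    Complex.cpow_def_of_ne_zero (Complex.ofReal_ne_zero.2 h₀.ne'),
    Complex.cpow_def_of_ne_zero (Complex.ofReal_ne_zero.2 h₁.ne'), ← Complex.exp_add,
    ← Complex.ofReal_log h₀.le, ← Complex.ofReal_log h₁.le, mul_neg, ← sub_eq_add_neg, ← sub_mul,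
    ← Complex.ofReal_sub, log_sigmoid_sub_log_one_sub_sigmoid, mul_comm]

lemma logisticPDF_mul_exp (s : ℂ) (y : ℝ) :
    (logisticPDF y : ℂ) * Complex.exp (s * y) =
      logisticPDF y • ((sigmoid y : ℂ) ^ (1 + s - 1) * (1 - (sigmoid y : ℂ)) ^ (1 - s - 1)) := by
  rw [add_sub_cancel_left, sub_sub_cancel_left, sigmoid_cpow_mul_one_sub_sigmoid_cpow_neg,
    Complex.real_smul]

lemma integrable_logisticPDF_mul_exp {s : ℂ} (hs : |s.re| < 1) :
    Integrable fun y : ℝ ↦ (logisticPDF y : ℂ) * Complex.exp (s * y) := by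
  obtain ⟨h_neg, h_pos⟩ := abs_lt.1 hs
  simp only [logisticPDF_mul_exp]
  refine (integrable_logisticPDF_smul_comp_sigmoid fun v : ℝ ↦
    (v : ℂ) ^ (1 + s - 1) * (1 - (v : ℂ)) ^ (1 - s - 1)).2 ?_
  rw [← intervalIntegrable_iff_integrableOn_Ioo_of_le zero_le_one]
  exact Complex.betaIntegral_convergent (by simpa using by linarith) (by simpa)

lemma Gamma_one_add_mul_Gamma_one_sub {s : ℂ} (hs : s ≠ 0) :
    Complex.Gamma (1 + s) * Complex.Gamma (1 - s) = π * s / Complex.sin (π * s) := by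
  rw [add_comm, Complex.Gamma_add_one _ hs, mul_assoc, Complex.Gamma_mul_Gamma_one_sub]
  ring

lemma betaIntegral_one_add_one_sub {s : ℂ} (hs : |s.re| < 1) :
    Complex.betaIntegral (1 + s) (1 - s) = Complex.Gamma (1 + s) * Complex.Gamma (1 - s) := by
  obtain ⟨h_neg, h_pos⟩ := abs_lt.1 hs
  have h_sum : (1 + s) + (1 - s) = (1 : ℕ) + 1 := by push_cast; ring
  rw [Complex.Gamma_mul_Gamma_eq_betaIntegral (by simpa using by linarith) (by simpa),
    h_sum, Complex.Gamma_nat_eq_factorial]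
  simp

lemma integral_logisticPDF_mul_exp {s : ℂ} (hs : |s.re| < 1) :
    ∫ y : ℝ, (logisticPDF y : ℂ) * Complex.exp (s * y) =
      Complex.Gamma (1 + s) * Complex.Gamma (1 - s) := by
  simp only [logisticPDF_mul_exp]
  rw [integral_logisticPDF_smul_comp_sigmoid fun v : ℝ ↦
      (v : ℂ) ^ (1 + s - 1) * (1 - (v : ℂ)) ^ (1 - s - 1),
    ← betaIntegral_one_add_one_sub hs, Complex.betaIntegral,
    intervalIntegral.integral_of_le zero_le_one, integral_Ioc_eq_integral_Ioo]

lemma sigmoid_add_sub_sigmoid_sub (x b : ℝ) :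
    sigmoid (x + b) - sigmoid (x - b) = Real.sinh b / (Real.cosh x + Real.cosh b) := by
  simp only [sigmoid_def, Real.cosh_eq, Real.sinh_eq, neg_add, sub_eq_add_neg, neg_neg,
    Real.exp_add, Real.exp_neg]
  field_simp
  ring

lemma intervalIntegral_logisticPDF_sub (x b : ℝ) :
    ∫ t in (-b)..b, logisticPDF (x - t) = Real.sinh b / (Real.cosh x + Real.cosh b) := by
  rw [intervalIntegral.integral_comp_sub_left,
    intervalIntegral.integral_eq_sub_of_hasDerivAt (fun y _ ↦ hasDerivAt_sigmoid_logisticPDF y)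
      (continuous_logisticPDF.intervalIntegrable _ _), sub_neg_eq_add, sigmoid_add_sub_sigmoid_sub]

lemma integral_logisticPDF_sub_mul_exp {b : ℝ} (hb : 0 < b) (s : ℂ) (x : ℝ) :
    (∫ t in Ioc (-b) b, (logisticPDF (x - t) : ℂ)) * Complex.exp (s * x) =
      Real.sinh b * (Complex.exp (s * x) / (Real.cosh x + Real.cosh b)) := by
  rw [← intervalIntegral.integral_of_le (by linarith), intervalIntegral.integral_ofReal,
    intervalIntegral_logisticPDF_sub]
  push_cast
  ring

end Logistic

section CoshKernel

variable {b : ℝ} {s : ℂ}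

lemma integrableOn_exp_mul_Ioc (s : ℂ) (a b : ℝ) :
    IntegrableOn (fun t : ℝ ↦ Complex.exp (s * t)) (Ioc a b) :=
  Continuous.integrableOn_Ioc (by fun_prop)

lemma ofReal_sinh_ne_zero (hb : b ≠ 0) : (Real.sinh b : ℂ) ≠ 0 :=
  Complex.ofReal_ne_zero.2 (Real.sinh_ne_zero.2 hb)

lemma integrable_exp_div_cosh_add_cosh (hb : b ≠ 0) (hs : |s.re| < 1) :
    Integrable fun x : ℝ ↦ Complex.exp (s * x) / (Real.cosh x + Real.cosh b) := by
  wlog hb₀ : 0 < b generalizing b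
  · simpa using this (neg_ne_zero.2 hb) (neg_pos.2 (hb.lt_of_le (not_lt.1 hb₀)))
  have h := integrable_integral_comp_sub_mul_exp (integrableOn_exp_mul_Ioc s (-b) b)
    (integrable_logisticPDF_mul_exp hs)
  simp only [integral_logisticPDF_sub_mul_exp hb₀] at h
  exact (integrable_const_mul_iff (ofReal_sinh_ne_zero hb).isUnit _).1 h

lemma integral_exp_div_cosh_add_cosh_eq_Gamma_mul (hb : b ≠ 0) (hs : |s.re| < 1) :
    ∫ x : ℝ, Complex.exp (s * x) / (Real.cosh x + Real.cosh b) =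
      Complex.Gamma (1 + s) * Complex.Gamma (1 - s) *
        (∫ t in (-b)..b, Complex.exp (s * t)) / Real.sinh b := by
  wlog hb₀ : 0 < b generalizing b
  · have h := this (neg_ne_zero.2 hb) (neg_pos.2 (hb.lt_of_le (not_lt.1 hb₀)))
    rw [intervalIntegral.integral_symm] at h
    simpa using h
  have h := integral_integral_comp_sub_mul_exp (integrableOn_exp_mul_Ioc s (-b) b)
    (integrable_logisticPDF_mul_exp hs)
  simp only [integral_logisticPDF_sub_mul_exp hb₀] at h
  rw [integral_const_mul, integral_logisticPDF_mul_exp hs,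
    ← intervalIntegral.integral_of_le (by linarith)] at h
  rw [eq_div_iff (ofReal_sinh_ne_zero hb), mul_comm, h, mul_comm]

lemma intervalIntegral_symm_exp_mul (hs : s ≠ 0) (b : ℝ) :
    ∫ t in (-b)..b, Complex.exp (s * t) = 2 * Complex.sinh (s * b) / s := by
  rw [integral_exp_mul_complex hs, Complex.two_sinh, Complex.ofReal_neg, mul_neg]

theorem integral_exp_div_cosh_add_cosh (hb : b ≠ 0) (hs : |s.re| < 1) :
    ∫ x : ℝ, Complex.exp (s * x) / (Real.cosh x + Real.cosh b) =
      if s = 0 then (2 * b / Real.sinh b : ℂ)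
      else 2 * π * Complex.sinh (s * b) / (Complex.sin (π * s) * Real.sinh b) := by
  rw [integral_exp_div_cosh_add_cosh_eq_Gamma_mul hb hs]
  split_ifs with hs₀
  · simp [hs₀, two_mul]
  · rw [Gamma_one_add_mul_Gamma_one_sub hs₀, intervalIntegral_symm_exp_mul hs₀]
    field_simp

variable {z : ℂ}

lemma cos_div_cosh_add_cosh (z : ℂ) (x b : ℝ) :
    Complex.cos (z * x) / (Real.cosh x + Real.cosh b) =
      (Complex.exp (z * Complex.I * x) / (Real.cosh x + Real.cosh b) +
        Complex.exp (-(z * Complex.I) * x) / (Real.cosh x + Real.cosh b)) / 2 := by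
  rw [Complex.cos]
  ring_nf

lemma integrable_cos_div_cosh_add_cosh (hb : b ≠ 0) (hz : |z.im| < 1) :
    Integrable fun x : ℝ ↦ Complex.cos (z * x) / (Real.cosh x + Real.cosh b) := by
  simp only [cos_div_cosh_add_cosh z]
  exact ((integrable_exp_div_cosh_add_cosh hb (by simpa using hz)).add
    (integrable_exp_div_cosh_add_cosh hb (by simpa using hz))).div_const 2

theorem integral_cos_div_cosh_add_cosh (hb : b ≠ 0) (hz : |z.im| < 1) :
    ∫ x : ℝ, Complex.cos (z * x) / (Real.cosh x + Real.cosh b) =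
      if z = 0 then (2 * b / Real.sinh b : ℂ)
      else 2 * π * Complex.sin (z * b) / (Complex.sinh (π * z) * Real.sinh b) := by
  have h_re : |(z * Complex.I).re| < 1 := by simpa using hz
  have h_re_neg : |(-(z * Complex.I)).re| < 1 := by simpa using hz
  simp only [cos_div_cosh_add_cosh z]
  rw [integral_div, integral_add (integrable_exp_div_cosh_add_cosh hb h_re)
    (integrable_exp_div_cosh_add_cosh hb h_re_neg), integral_exp_div_cosh_add_cosh hb h_re,
    integral_exp_div_cosh_add_cosh hb h_re_neg]
  rcases eq_or_ne z 0 with rfl | hz₀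
  · simp
  · have h_b : z * Complex.I * b = z * b * Complex.I := mul_right_comm ..
    have h_pi : π * (z * Complex.I) = π * z * Complex.I := (mul_assoc ..).symm
    simp only [neg_eq_zero, mul_eq_zero, hz₀, Complex.I_ne_zero, or_self, if_false, neg_mul,
      mul_neg, Complex.sinh_neg, Complex.sin_neg, h_b, h_pi, Complex.sinh_mul_I, Complex.sin_mul_I]
    field_simp
    ring

end CoshKernel

theorem stmt_9_general {z : ℂ} {b : ℝ} (hz : |z.im| < 1) (hb : b ≠ 0) :
    ∫ u in Ioi (0 : ℝ), (rexp (-u * Real.cosh b) : ℂ) *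
        ((∫ x : ℝ, (rexp (-u * Real.cosh x) : ℂ) * Complex.cos (z * x)) / 2)
      = if z = 0 then (b / Real.sinh b : ℂ)
        else π * Complex.sin (z * b) / (Complex.sinh (π * z) * Real.sinh b) := by
  have h_kernel (u : ℝ) : (rexp (-u * Real.cosh b) : ℂ) *
        ((∫ x : ℝ, (rexp (-u * Real.cosh x) : ℂ) * Complex.cos (z * x)) / 2) =
      (∫ x : ℝ, rexp (-u * (Real.cosh x + Real.cosh b)) • Complex.cos (z * x)) / 2 := by
    rw [← mul_div_assoc, ← integral_const_mul]
    congr 2 with x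
    rw [mul_add, add_comm, Real.exp_add, Complex.real_smul, Complex.ofReal_mul, mul_assoc]
  have h_smul (x : ℝ) : (Real.cosh x + Real.cosh b)⁻¹ • Complex.cos (z * x) =
      Complex.cos (z * x) / (Real.cosh x + Real.cosh b) := by
    rw [Complex.real_smul, Complex.ofReal_inv, Complex.ofReal_add, inv_mul_eq_div]
  simp only [h_kernel]
  rw [integral_div, integral_Ioi_integral_exp_neg_mul_smul (by fun_prop)
    (fun x ↦ add_pos (Real.cosh_pos x) (Real.cosh_pos b))
    (by simpa only [h_smul] using integrable_cos_div_cosh_add_cosh hb hz)]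
  simp only [h_smul, integral_cos_div_cosh_add_cosh hb hz]
  split_ifs <;> ring

theorem stmt_9 (ξ b : ℝ) (hb : 0 < b) :
    ∫ u in Ioi (0:ℝ),
        Real.exp (-u * Real.cosh b) * ((1 / 2) * ∫ x : ℝ, Real.exp (-u * Real.cosh x) * Real.cos (ξ * x))
      = if ξ = 0 then b / Real.sinh b
        else π * Real.sin (ξ * b) / (Real.sinh (π * ξ) * Real.sinh b) := by
  simp only [one_div_mul_eq_div]
  rw [← Complex.ofReal_inj, apply_ite Complex.ofReal]
  exact_mod_cast stmt_9_general (z := ξ) (by simp) hb.ne'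
end

section
/- Let C be a standard Cauchy random variable and ε an independent Rademacher variable. Then for every a, θ ∈ [-1, 1], the random variable aC + θ√(1 + a²C²) ε has the same distribution as aC + θ√(1 − a²) ε. Equivalently, both have characteristic function ξ ↦ exp(−|aξ|) cos(θ ξ √(1 − a²)). -/
open MeasureTheory Real Set ProbabilityTheory
open scoped ENNReal

open Filter Metric
open scoped Topology NNReal

/-!
The law of `α C + v(C) ε` is found from its characteristic function, the Cauchy integral of
`exp (i ξ α x) cos (ξ v(x))`. A bounded holomorphic function `f` on the upper half-plane, continuous
up to the boundary, has Cauchy integral `f (x₀ + γ i)`: this is the mean value property on the disc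
transported by the Cayley transform. When `v(x)² = A + B x²`, evenness of the cosine makes
`exp (i ξ α z) cos (ξ √(A + B z²))` entire in spite of the square root, and when `0 ≤ A` and
`0 ≤ B ≤ α²` the growth of the cosine is compensated by the decay of the exponential, so that its
modulus is at most `1` on the half of the plane where the exponential decays. Evaluating at `i`
shows that `A` and `B` enter the law only through `A - B`, which is `θ² (1 - a²)` for both
variables.
-/

section Poisson

variable {E : Type*} [NormedAddCommGroup E]

theorem circleAverage_eq_of_bounded_off_countable [NormedSpace ℂ E] [CompleteSpace E]
    {g : ℂ → E} {c : ℂ} {R M : ℝ} {s : Set ℂ} (hR : 0 < R) (hs : s.Countable)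
    (hd : DifferentiableOn ℂ g (ball c R)) (hM : ∀ z ∈ ball c R, ‖g z‖ ≤ M)
    (hc : ∀ z ∈ sphere c R \ s, ContinuousWithinAt g (ball c R) z) :
    circleAverage g c R = g c := by
  have circleMap_mem {r : ℝ} (hr : r ∈ Ioo 0 R) (φ : ℝ) : circleMap c r φ ∈ ball c R := by
    simpa [circleMap, abs_of_pos hr.1] using hr.2
  have hr : ∀ᶠ r in 𝓝[<] R, r ∈ Ioo 0 R := Ioo_mem_nhdsLT hR
  have tendsto_circleAverage : Tendsto (circleAverage g c) (𝓝[<] R) (𝓝 (circleAverage g c R)) := by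
    refine Tendsto.const_smul
      (intervalIntegral.tendsto_integral_filter_of_dominated_convergence (fun _ ↦ M) ?_ ?_
        intervalIntegrable_const ?_) _
    · filter_upwards [hr] with r hr
      exact (hd.continuousOn.comp_continuous (continuous_circleMap c r)
        (circleMap_mem hr)).aestronglyMeasurable
    · filter_upwards [hr] with r hr
      exact ae_of_all _ fun φ _ ↦ hM _ (circleMap_mem hr φ)
    · filter_upwards [(hs.preimage_circleMap c hR.ne').ae_notMem volume] with φ hφ _
      refine (hc _ ⟨circleMap_mem_sphere c hR.le φ, hφ⟩).tendsto.comp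
        (tendsto_nhdsWithin_iff.mpr ⟨?_, hr.mono fun r hr ↦ circleMap_mem hr φ⟩)
      have : Continuous fun r ↦ circleMap c r φ := by unfold circleMap; fun_prop
      exact this.continuousWithinAt
  refine tendsto_nhds_unique tendsto_circleAverage (tendsto_const_nhds.congr' ?_)
  filter_upwards [hr] with r hr
  refine (DiffContOnCl.circleAverage ?_).symm
  rw [abs_of_pos hr.1]
  exact hd.diffContOnCl_ball (closedBall_subset_ball hr.2)

/-- The Cayley transform of the unit disc onto the upper half-plane, normalised by `0 ↦ I` and
`-1 ↦ ∞`; as `x / 0 = 0`, it takes the value `0` at `-1`. -/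
noncomputable def cayley (w : ℂ) : ℂ := Complex.I * (1 - w) / (1 + w)

lemma cayley_zero : cayley 0 = Complex.I := by simp [cayley]

lemma im_cayley (w : ℂ) : (cayley w).im = (1 - Complex.normSq w) / Complex.normSq (1 + w) := by
  simp only [cayley, Complex.div_im, Complex.mul_im, Complex.mul_re, Complex.I_re, Complex.I_im,
    Complex.sub_re, Complex.sub_im, Complex.add_re, Complex.add_im, Complex.one_re, Complex.one_im,
    Complex.normSq_apply]
  ring

lemma differentiableAt_cayley {w : ℂ} (hw : w ≠ -1) : DifferentiableAt ℂ cayley w := by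
  have : 1 + w ≠ 0 := fun h ↦ hw (by linear_combination h)
  unfold cayley
  fun_prop (disch := assumption)

lemma cayley_circleMap (φ : ℝ) : cayley (circleMap 0 1 φ) = tan (φ / 2) := by
  have hexp : circleMap 0 1 φ = Complex.exp (φ / 2 * Complex.I) ^ 2 := by
    rw [circleMap_zero, Complex.ofReal_one, one_mul, ← Complex.exp_nat_mul]
    push_cast
    ring_nf
  rw [Complex.ofReal_tan, Complex.tan_eq_sin_div_cos, Complex.sin, Complex.cos, cayley, hexp,
    neg_mul, Complex.exp_neg]
  have := Complex.exp_ne_zero (φ / 2 * Complex.I)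
  push_cast
  field_simp
  ring_nf

theorem integral_comp_tan_half [NormedSpace ℝ E] (f : ℝ → E) :
    ∫ φ in -π..π, f (tan (φ / 2)) = (2 : ℝ) • ∫ x : ℝ, (1 + x ^ 2)⁻¹ • f x := by
  have image_eq : (fun x ↦ 2 * arctan x) '' univ = Ioo (-π) π := by
    rw [image_univ, range_comp' (2 * ·) arctan, range_arctan, image_mul_left_Ioo two_pos]
    ring_nf
  rw [intervalIntegral.integral_of_le (by linarith [pi_pos]), integral_Ioc_eq_integral_Ioo,
    ← image_eq, integral_image_eq_integral_abs_deriv_smul .univ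
      (fun x _ ↦ ((hasDerivAt_arctan x).const_mul 2).hasDerivWithinAt)
      ((mul_right_injective₀ two_ne_zero).comp arctan_injective).injOn,
    ← integral_smul, setIntegral_univ]
  refine integral_congr_ae <| .of_forall fun x ↦ ?_
  have : 0 < 1 + x ^ 2 := by positivity
  simp [tan_arctan, mul_smul, abs_of_pos this]

theorem circleAverage_comp_cayley [NormedSpace ℝ E] (f : ℂ → E) :
    circleAverage (f ∘ cayley) 0 1 = π⁻¹ • ∫ x : ℝ, (1 + x ^ 2)⁻¹ • f x := by
  rw [circleAverage_eq_integral_add (-π)]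
  simp only [Function.comp_apply, cayley_circleMap]
  rw [intervalIntegral.integral_comp_add_right fun φ ↦ f (tan (φ / 2) : ℝ), zero_add,
    show 2 * π + -π = π by ring, integral_comp_tan_half (f ·), smul_smul]
  congr 1
  field_simp

theorem integral_inv_one_add_sq_smul_of_bounded [NormedSpace ℂ E] [CompleteSpace E] {f : ℂ → E}
    {M : ℝ} (hf : DiffContOnCl ℂ f {z | 0 < z.im})
    (hM : ∀ z : ℂ, 0 < z.im → ‖f z‖ ≤ M) :
    ∫ x : ℝ, (1 + x ^ 2)⁻¹ • f x = π • f Complex.I := by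
  have ne_neg_one {w : ℂ} (hw : w ∈ ball 0 1) : w ≠ -1 := by rintro rfl; simp at hw
  have mapsTo : MapsTo cayley (ball 0 1) {z | 0 < z.im} := fun w hw ↦ by
    rw [mem_ofPred_eq, im_cayley]
    refine div_pos ?_ (Complex.normSq_pos.mpr fun h ↦ ne_neg_one hw (by linear_combination h))
    rw [mem_ball_zero_iff] at hw
    rw [Complex.normSq_eq_norm_sq]
    nlinarith [norm_nonneg w]
  have mean_value : circleAverage (f ∘ cayley) 0 1 = f Complex.I := by
    rw [circleAverage_eq_of_bounded_off_countable one_pos (countable_singleton (-1))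
      (hf.differentiableOn.comp
        (fun w hw ↦ (differentiableAt_cayley (ne_neg_one hw)).differentiableWithinAt) mapsTo)
      (fun w hw ↦ hM _ (mapsTo hw)), Function.comp_apply, cayley_zero]
    rintro w ⟨hw, hw_ne⟩
    have hw_mem : cayley w ∈ closure {z | 0 < z.im} := by
      rw [mem_sphere_zero_iff_norm] at hw
      simp [Complex.closure_setOfPred_lt_im, im_cayley, Complex.normSq_eq_norm_sq, hw]
    exact ((hf.continuousOn _ hw_mem).mono subset_closure).comp
      (differentiableAt_cayley hw_ne).continuousAt.continuousWithinAt mapsTo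
  rw [← mean_value, circleAverage_comp_cayley, smul_smul, mul_inv_cancel₀ pi_ne_zero, one_smul]

theorem integral_cauchyMeasure_eq_integral_inv_one_add_sq_smul [NormedSpace ℝ E] (x₀ : ℝ)
    {γ : ℝ≥0} (hγ : γ ≠ 0) (f : ℝ → E) :
    ∫ x, f x ∂cauchyMeasure x₀ γ = π⁻¹ • ∫ u : ℝ, (1 + u ^ 2)⁻¹ • f (x₀ + γ * u) := by
  have hγ_pos : (0 : ℝ) < γ := by positivity
  set g : ℝ → E := fun u ↦ (1 + u ^ 2)⁻¹ • f (x₀ + γ * u) with hg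
  have density_smul (x : ℝ) :
      (cauchyPDF x₀ γ x).toReal • f x = (π⁻¹ * (γ : ℝ)⁻¹) • g ((x - x₀) / γ) := by
    rw [cauchyPDF, ENNReal.toReal_ofReal (cauchyPDF_pos x₀ hγ x).le, cauchyPDFReal_def', mul_smul,
      NNReal.coe_inv]
    simp only [hg, mul_div_cancel₀ _ hγ_pos.ne', add_sub_cancel]
  rw [cauchyMeasure_of_scale_ne_zero x₀ hγ, integral_withDensity_eq_integral_toReal_smul
    (measurable_cauchyPDF x₀ γ) (.of_forall fun _ ↦ ENNReal.ofReal_lt_top)]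
  simp only [density_smul]
  rw [integral_smul, integral_sub_right_eq_self fun x ↦ g (x / γ), Measure.integral_comp_div,
    smul_smul, abs_of_pos hγ_pos, inv_mul_cancel_right₀ hγ_pos.ne']

theorem integral_cauchyMeasure_of_bounded [NormedSpace ℂ E] [CompleteSpace E] {f : ℂ → E}
    {M : ℝ} (hf : DiffContOnCl ℂ f {z | 0 < z.im})
    (hM : ∀ z : ℂ, 0 < z.im → ‖f z‖ ≤ M) (x₀ : ℝ) (γ : ℝ≥0) :
    ∫ x : ℝ, f x ∂cauchyMeasure x₀ γ = f (x₀ + γ * Complex.I) := by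
  rcases eq_or_ne γ 0 with rfl | hγ
  · simp
  have mapsTo : MapsTo (fun z : ℂ ↦ x₀ + γ * z) {z | 0 < z.im} {z | 0 < z.im} := fun z hz ↦ by
    simpa [pos_iff_ne_zero, hγ] using hz
  have hf_affine : DiffContOnCl ℂ (fun z ↦ f (x₀ + γ * z)) {z | 0 < z.im} :=
    hf.comp (Differentiable.diffContOnCl (by fun_prop)) mapsTo
  have poisson := integral_inv_one_add_sq_smul_of_bounded hf_affine fun z hz ↦ hM _ (mapsTo hz)
  simpa [integral_cauchyMeasure_eq_integral_inv_one_add_sq_smul x₀ hγ]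
    using (inv_smul_eq_iff₀ pi_ne_zero).mpr poisson

lemma integral_comp_neg_cauchyMeasure [NormedSpace ℝ E] [CompleteSpace E] (x₀ : ℝ) (γ : ℝ≥0)
    (f : ℝ → E) :
    ∫ x, f (-x) ∂cauchyMeasure x₀ γ = ∫ x, f x ∂cauchyMeasure (-x₀) γ := by
  rcases eq_or_ne γ 0 with rfl | hγ
  · simp
  rw [integral_cauchyMeasure_eq_integral_inv_one_add_sq_smul x₀ hγ,
    integral_cauchyMeasure_eq_integral_inv_one_add_sq_smul (-x₀) hγ, ← integral_neg_eq_self]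
  simp only [neg_sq, neg_add, mul_neg, neg_neg]

end Poisson

lemma complex_sq_sqrt (z : ℂ) : Complex.sqrt z ^ 2 = z := Complex.cpow_ofNat_inv_pow z 2

lemma even_comp_eq_of_sq_eq_sq {R α : Type*} [CommRing R] [NoZeroDivisors R] {f : R → α}
    (hf : f.Even) {s t : R} (h : s ^ 2 = t ^ 2) : f s = f t := by
  rcases sq_eq_sq_iff_eq_or_eq_neg.mp h with rfl | rfl
  exacts [rfl, hf t]

theorem differentiable_even_comp_sqrt {E : Type*} [NormedAddCommGroup E] [NormedSpace ℂ E]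
    [CompleteSpace E] {f : ℂ → E} (hf : Differentiable ℂ f) (heven : f.Even) :
    Differentiable ℂ fun z ↦ f (Complex.sqrt z) := by
  have differentiableAt_sqrt {z : ℂ} (hz : z ∈ Complex.slitPlane) :
      DifferentiableAt ℂ Complex.sqrt z :=
    differentiableAt_id.cpow_const hz
  -- The right-hand side is differentiable across the branch cut of the left-hand side.
  have sqrt_eq_sqrt_neg (z : ℂ) : f (Complex.sqrt z) = f (Complex.I * Complex.sqrt (-z)) :=
    even_comp_eq_of_sq_eq_sq heven <| by simp [mul_pow, complex_sq_sqrt]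
  have differentiableAt_of_ne_zero {z : ℂ} (hz : z ≠ 0) :
      DifferentiableAt ℂ (fun z ↦ f (Complex.sqrt z)) z := by
    rcases Complex.mem_slitPlane_or_neg_mem_slitPlane hz with hz | hz
    · exact (hf _).comp z (differentiableAt_sqrt hz)
    · simp only [sqrt_eq_sqrt_neg]
      exact (hf _).comp z (((differentiableAt_sqrt hz).comp z differentiableAt_id.neg).const_mul _)
  have continuousAt_zero : ContinuousAt (fun z ↦ f (Complex.sqrt z)) 0 := by
    have continuousAt_cpow : ContinuousAt (fun p : ℂ × ℂ ↦ p.1 ^ p.2) (0, 2⁻¹) :=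
      Complex.continuousAt_cpow_zero_of_re_pos (by norm_num)
    exact hf.continuous.continuousAt.comp
      (continuousAt_cpow.comp (f := fun z ↦ (z, 2⁻¹)) (continuousAt_id.prodMk continuousAt_const))
  rw [← differentiableOn_univ,
    ← Complex.differentiableOn_compl_singleton_and_continuousAt_iff univ_mem]
  exact ⟨fun z hz ↦ (differentiableAt_of_ne_zero hz.2).differentiableWithinAt, continuousAt_zero⟩

lemma norm_cos_le_exp_abs_im (z : ℂ) : ‖Complex.cos z‖ ≤ exp |z.im| := by
  have norm_le {w : ℂ} (hw : |w.re| = |z.im|) : ‖Complex.exp w‖ ≤ exp |z.im| := by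
    rw [Complex.norm_exp, ← hw]
    exact exp_le_exp.mpr (le_abs_self _)
  rw [Complex.cos, norm_div, Complex.norm_ofNat, div_le_iff₀ two_pos, mul_two]
  exact (norm_add_le _ _).trans (add_le_add (norm_le (by simp)) (norm_le (by simp)))

lemma sq_im_le_of_sq_eq_add_mul_sq {A B : ℝ} (hA : 0 ≤ A) (hB : 0 ≤ B) {s w : ℂ}
    (h : s ^ 2 = A + B * w ^ 2) : s.im ^ 2 ≤ B * w.im ^ 2 := by
  have re_eq : s.re ^ 2 - s.im ^ 2 = A + B * (w.re ^ 2 - w.im ^ 2) := by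
    simpa [sq] using congrArg Complex.re h
  have im_eq : s.re * s.im = B * (w.re * w.im) := by
    have := congrArg Complex.im h
    simp only [sq, Complex.mul_im, Complex.add_im, Complex.ofReal_im, Complex.ofReal_re] at this
    linarith
  by_contra! him
  have hre : B * w.re ^ 2 < s.re ^ 2 := by linarith
  have : (s.re * s.im) ^ 2 = B * w.re ^ 2 * (B * w.im ^ 2) := by rw [im_eq]; ring
  have := mul_lt_mul'' hre him (by positivity) (by positivity)
  linarith

section Integral

variable {A B c : ℝ}

lemma norm_exp_mul_cos_sqrt_le_one (hA : 0 ≤ A) (hB : 0 ≤ B) (hc : 0 ≤ c) (hBc : B ≤ c ^ 2) {z : ℂ}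
    (hz : 0 ≤ z.im) :
    ‖Complex.exp (c * z * Complex.I) * Complex.cos (Complex.sqrt (A + B * z ^ 2))‖ ≤ 1 := by
  set s := Complex.sqrt (A + B * z ^ 2)
  have im_sqrt_le : |s.im| ≤ c * z.im := by
    refine abs_le_of_sq_le_sq ?_ (by positivity)
    calc s.im ^ 2 ≤ B * z.im ^ 2 := sq_im_le_of_sq_eq_add_mul_sq hA hB (complex_sq_sqrt _)
      _ ≤ c ^ 2 * z.im ^ 2 := by gcongr
      _ = (c * z.im) ^ 2 := by ring
  calc ‖Complex.exp (c * z * Complex.I) * Complex.cos s‖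
      = exp (-(c * z.im)) * ‖Complex.cos s‖ := by simp [Complex.norm_exp]
    _ ≤ exp (-(c * z.im)) * exp (c * z.im) := by
        gcongr
        exact (norm_cos_le_exp_abs_im s).trans (exp_le_exp.mpr im_sqrt_le)
    _ = 1 := by rw [← exp_add, neg_add_cancel, exp_zero]

theorem integral_exp_mul_cos_sqrt_cauchyMeasure_of_nonneg (hA : 0 ≤ A) (hB : 0 ≤ B) (hc : 0 ≤ c)
    (hBc : B ≤ c ^ 2) (γ : ℝ≥0) :
    ∫ x : ℝ, Complex.exp (c * x * Complex.I) * Complex.cos (Complex.sqrt (A + B * x ^ 2))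
        ∂cauchyMeasure 0 γ
      = Complex.exp (-(γ * c)) * Complex.cos (Complex.sqrt (A - B * γ ^ 2)) := by
  have cos_sqrt : Differentiable ℂ fun z ↦ Complex.cos (Complex.sqrt z) :=
    differentiable_even_comp_sqrt Complex.differentiable_cos Complex.cos_neg
  have hf : Differentiable ℂ fun z : ℂ ↦
      Complex.exp (c * z * Complex.I) * Complex.cos (Complex.sqrt (A + B * z ^ 2)) :=
    .mul (by fun_prop) (cos_sqrt.comp (g := fun z ↦ Complex.cos (Complex.sqrt z))
      (f := fun z : ℂ ↦ (A + B * z ^ 2 : ℂ)) (by fun_prop))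
  rw [integral_cauchyMeasure_of_bounded hf.diffContOnCl
    (fun z hz ↦ norm_exp_mul_cos_sqrt_le_one hA hB hc hBc hz.le) 0 γ,
    Complex.ofReal_zero, zero_add, mul_pow, Complex.I_sq]
  congr 2
  · linear_combination (c * γ : ℂ) * Complex.I_sq
  · ring_nf

theorem integral_exp_mul_cos_sqrt_cauchyMeasure (hA : 0 ≤ A) (hB : 0 ≤ B) (hBc : B ≤ c ^ 2)
    (γ : ℝ≥0) :
    ∫ x : ℝ, Complex.exp (c * x * Complex.I) * Complex.cos (Complex.sqrt (A + B * x ^ 2))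
        ∂cauchyMeasure 0 γ
      = Complex.exp (-(γ * |c|)) * Complex.cos (Complex.sqrt (A - B * γ ^ 2)) := by
  rcases le_total 0 c with hc | hc
  · rw [abs_of_nonneg hc]
    exact integral_exp_mul_cos_sqrt_cauchyMeasure_of_nonneg hA hB hc hBc γ
  · rw [abs_of_nonpos hc, ← integral_exp_mul_cos_sqrt_cauchyMeasure_of_nonneg hA hB
      (neg_nonneg.mpr hc) (hBc.trans_eq (neg_sq c).symm) γ, ← neg_zero,
      ← integral_comp_neg_cauchyMeasure]
    simp only [Complex.ofReal_neg, neg_sq, neg_mul, mul_neg, neg_zero]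

end Integral

section Rademacher

variable {Ω 𝓧 : Type*} {mΩ : MeasurableSpace Ω} {m𝓧 : MeasurableSpace 𝓧} {P : Measure Ω}

/-- The Rademacher distribution: the uniform probability on the signs `{1, -1}`. -/
noncomputable def rademacherMeasure : Measure ℝ :=
  (1 / 2 : ℝ≥0∞) • Measure.dirac 1 + (1 / 2 : ℝ≥0∞) • Measure.dirac (-1)

instance : IsProbabilityMeasure rademacherMeasure :=
  ⟨by simp [rademacherMeasure, ENNReal.inv_two_add_inv_two]⟩

lemma integral_rademacherMeasure {E : Type*} [NormedAddCommGroup E] [NormedSpace ℝ E]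
    [CompleteSpace E] (f : ℝ → E) : ∫ e, f e ∂rademacherMeasure = (2 : ℝ)⁻¹ • (f 1 + f (-1)) := by
  rw [rademacherMeasure, integral_add_measure ((integrable_dirac (by simp)).smul_measure (by simp))
    ((integrable_dirac (by simp)).smul_measure (by simp)), integral_smul_measure,
    integral_smul_measure, integral_dirac, integral_dirac]
  simp

theorem charFun_map_add_mul_rademacher {X : Ω → 𝓧} {μ : Measure 𝓧} {ε : Ω → ℝ}
    (hX : HasLaw X μ P) (hε : HasLaw ε rademacherMeasure P) (hindep : X ⟂ᵢ[P] ε) {u v : 𝓧 → ℝ}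
    (hu : Measurable u) (hv : Measurable v) (ξ : ℝ) :
    charFun (P.map fun ω ↦ u (X ω) + v (X ω) * ε ω) ξ
      = ∫ x, Complex.exp (ξ * u x * Complex.I) * Complex.cos (ξ * v x) ∂μ := by
  have : IsProbabilityMeasure P := hε.isProbabilityMeasure
  have : IsFiniteMeasure μ := hX.isFiniteMeasure_iff.mp inferInstance
  have hprod := hindep.hasLaw_prod hX hε
  set g : 𝓧 × ℝ → ℝ := fun p ↦ u p.1 + v p.1 * p.2
  have hg : Measurable g := by fun_prop
  have map_eq : P.map (fun ω ↦ u (X ω) + v (X ω) * ε ω) = (μ.prod rademacherMeasure).map g := by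
    rw [← hprod.map_eq, AEMeasurable.map_map_of_aemeasurable hg.aemeasurable hprod.aemeasurable]
    rfl
  have integrable_char :
      Integrable (fun p ↦ Complex.exp (ξ * g p * Complex.I)) (μ.prod rademacherMeasure) := by
    refine .of_bound (by fun_prop) 1 (.of_forall fun p ↦ ?_)
    rw [← Complex.ofReal_mul, Complex.norm_exp_ofReal_mul_I]
  rw [map_eq, charFun_apply_real, integral_map hg.aemeasurable (by fun_prop),
    integral_prod _ integrable_char]
  refine integral_congr_ae <| .of_forall fun x ↦ ?_
  simp only [g, integral_rademacherMeasure, Complex.cos, Complex.real_smul]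
  push_cast
  simp only [mul_add, add_mul, Complex.exp_add, mul_one, mul_neg, neg_mul]
  ring

end Rademacher

theorem charFun_map_cauchy_add_mul_rademacher {Ω : Type*} {mΩ : MeasurableSpace Ω} {P : Measure Ω}
    {C ε : Ω → ℝ} {γ : ℝ≥0} (hC : HasLaw C (cauchyMeasure 0 γ) P)
    (hε : HasLaw ε rademacherMeasure P) (hindep : C ⟂ᵢ[P] ε) {α A B : ℝ} (hA : 0 ≤ A) (hB : 0 ≤ B)
    (hBα : B ≤ α ^ 2) {v : ℝ → ℝ} (hv : Measurable v) (hv_sq : ∀ x, v x ^ 2 = A + B * x ^ 2)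
    (ξ : ℝ) :
    charFun (P.map fun ω ↦ α * C ω + v (C ω) * ε ω) ξ
      = Complex.exp (-(γ * |ξ * α|))
        * Complex.cos (Complex.sqrt ((ξ ^ 2 * (A - B * γ ^ 2) : ℝ))) := by
  have hBξ : ξ ^ 2 * B ≤ (ξ * α) ^ 2 := by rw [mul_pow]; gcongr
  have cos_eq (x : ℝ) : Complex.cos (ξ * v x)
      = Complex.cos (Complex.sqrt ((ξ ^ 2 * A : ℝ) + (ξ ^ 2 * B : ℝ) * x ^ 2)) := by
    refine even_comp_eq_of_sq_eq_sq Complex.cos_neg ?_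
    rw [complex_sq_sqrt]
    exact_mod_cast (by linear_combination ξ ^ 2 * hv_sq x)
  have exp_eq (x : ℝ) : Complex.exp (ξ * (α * x : ℝ) * Complex.I)
      = Complex.exp ((ξ * α : ℝ) * x * Complex.I) := by
    push_cast
    ring_nf
  rw [charFun_map_add_mul_rademacher hC hε hindep (measurable_const_mul α) hv ξ]
  simp only [cos_eq, exp_eq]
  rw [integral_exp_mul_cos_sqrt_cauchyMeasure (by positivity) (by positivity) hBξ γ]
  push_cast
  ring_nf

lemma cauchyMeasure_zero_one : cauchyMeasure 0 1
    = volume.withDensity fun x ↦ ENNReal.ofReal (1 / (π * (1 + x ^ 2))) := by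
  rw [cauchyMeasure_of_scale_ne_zero 0 one_ne_zero]
  refine congrArg _ <| funext fun x ↦ ?_
  simp [cauchyPDF_def, cauchyPDFReal_def', mul_comm]

theorem stmt_11 {Ω : Type*} [MeasurableSpace Ω] (P : Measure Ω) [IsProbabilityMeasure P]
    (C ε : Ω → ℝ) (hC : Measurable C) (hε : Measurable ε)
    (hCauchy : P.map C = volume.withDensity (fun x => ENNReal.ofReal (1 / (π * (1 + x ^ 2)))))
    (hRad : P.map ε = ((1:ℝ≥0∞)/2) • Measure.dirac (1:ℝ) + ((1:ℝ≥0∞)/2) • Measure.dirac (-1:ℝ))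
    (hindep : IndepFun C ε P)
    (a θ : ℝ) (ha : a ∈ Icc (-1:ℝ) 1) (hθ : θ ∈ Icc (-1:ℝ) 1) :
    P.map (fun ω => a * C ω + θ * Real.sqrt (1 + a ^ 2 * C ω ^ 2) * ε ω)
      = P.map (fun ω => a * C ω + θ * Real.sqrt (1 - a ^ 2) * ε ω) := by
  have hC_law : HasLaw C (cauchyMeasure 0 1) P :=
    ⟨hC.aemeasurable, hCauchy.trans cauchyMeasure_zero_one.symm⟩
  have hε_law : HasLaw ε rademacherMeasure P := ⟨hε.aemeasurable, hRad⟩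
  have ha_sq : 0 ≤ 1 - a ^ 2 := by nlinarith [ha.1, ha.2]
  have hθ_sq : θ ^ 2 ≤ 1 := by nlinarith [hθ.1, hθ.2]
  refine Measure.ext_of_charFun (funext fun ξ ↦ ?_)
  rw [charFun_map_cauchy_add_mul_rademacher hC_law hε_law hindep
      (v := fun x ↦ θ * √(1 + a ^ 2 * x ^ 2)) (A := θ ^ 2) (B := θ ^ 2 * a ^ 2)
      (by positivity) (by positivity) (mul_le_of_le_one_left (sq_nonneg a) hθ_sq) (by fun_prop)
      (fun x ↦ by rw [mul_pow, sq_sqrt (by positivity)]; ring),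
    charFun_map_cauchy_add_mul_rademacher hC_law hε_law hindep
      (v := fun _ ↦ θ * √(1 - a ^ 2)) (A := θ ^ 2 * (1 - a ^ 2)) (B := 0)
      (by positivity) le_rfl (sq_nonneg a) (by fun_prop)
      (fun x ↦ by rw [mul_pow, sq_sqrt ha_sq]; ring)]
  congr 3
  push_cast
  ring
end
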